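/- arXiv:2308.07956 — 2 statements merged into one kernel-verified Lean document; each statement's English description precedes it below -/
import Mathlib

section
/- Suppose a complex matrix B on ℂᵐ ⊗ ℂⁿ satisfies Tr₁([B, A]) = 0 for all complex matrices A on ℂᵐ ⊗ ℂⁿ, where Tr₁ is the partial trace over the first (m-dimensional) factor. Then there exists an m×m complex matrix M such that B = M ⊗ I_n. -/
/-!
Testing the hypothesis on a matrix unit `A = E_{(a,b),(c,d)}` gives, at the entry `(j, l)`,
`δ_{dl} B((c,j),(a,b)) = δ_{bj} B((c,d),(a,l))`. With `d = l`, the case `j ≠ b` kills the blocks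
`B((c,·),(a,·))` off the diagonal, and the case `j = b` makes their diagonals constant, so every
block is a scalar multiple of the identity.
-/

open Matrix
open scoped Kronecker

/-- Partial trace over the first tensor factor. -/
noncomputable def ptrace1 {m n : Type*} [Fintype m] (X : Matrix (m × n) (m × n) ℂ) :
    Matrix n n ℂ :=
  Matrix.of fun j l => ∑ i, X (i, j) (i, l)

theorem ptrace1_comm_single {m n : Type*} [Fintype m] [Fintype n] [DecidableEq m]
    [DecidableEq n] (B : Matrix (m × n) (m × n) ℂ) (a c : m) (b d j l : n) :
    ptrace1 (B * Matrix.single (a, b) (c, d) 1 - Matrix.single (a, b) (c, d) 1 * B) j l =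
      (if d = l then B (c, j) (a, b) else 0) - (if b = j then B (c, d) (a, l) else 0) := by
  simp only [ptrace1, Matrix.of_apply, Matrix.sub_apply, Matrix.mul_apply, Matrix.single_apply,
    Finset.sum_sub_distrib, Prod.mk.injEq, mul_ite, ite_mul, mul_one, one_mul, mul_zero, zero_mul,
    Fintype.sum_prod_type, ite_and]
  simp

/-- If `Tr₁([B, A]) = 0` for all matrices `A` on the bipartite space, then
`B = M ⊗ I` for some matrix `M` on the first factor. -/
theorem ptrace1_commutator_eq_zero_imp {m n : Type*} [Fintype m] [Fintype n] [DecidableEq n]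
    (B : Matrix (m × n) (m × n) ℂ)
    (hB : ∀ A : Matrix (m × n) (m × n) ℂ, ptrace1 (B * A - A * B) = 0) :
    ∃ M : Matrix m m ℂ, B = M ⊗ₖ (1 : Matrix n n ℂ) := by
  classical
  have h (a c : m) (b d j l : n) :
      (if d = l then B (c, j) (a, b) else 0) = if b = j then B (c, d) (a, l) else 0 := by
    have h₀ := ptrace1_comm_single B a c b d j l
    rw [hB] at h₀
    exact sub_eq_zero.mp h₀.symm
  rcases isEmpty_or_nonempty n with hn | ⟨⟨k⟩⟩
  · exact ⟨0, by ext ⟨_, j⟩; exact hn.elim j⟩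
  · refine ⟨Matrix.of fun c a => B (c, k) (a, k), ?_⟩
    ext ⟨c, j⟩ ⟨a, b⟩
    have h₁ := h a c b k j k
    by_cases hjb : j = b
    · subst hjb
      simpa [Matrix.kroneckerMap_apply] using h₁
    · simpa [Matrix.kroneckerMap_apply, Matrix.one_apply, hjb, Ne.symm hjb] using h₁
end

section
/- Let Λ be a Hermitian matrix on ℂᵐ ⊗ ℂⁿ and let ρ be an m×m density matrix. Then the output of the associated Hermitian-preserving map is bounded in operator norm by the partially transposed Choi matrix: ‖Tr₁(Λ (ρᵀ ⊗ I_n))‖_∞ ≤ ‖Λ^{T₁}‖_∞. -/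
/-!
Write `ρ = Bᴴ B` and let `b s` be the rows of `B`. For each `s`, put `V s = conj (b s) ⊗ I`, as a
map from `ℂⁿ` to `ℂᵐ ⊗ ℂⁿ`. Then `Tr₁(Λ (ρᵀ ⊗ I)) = ∑ s, (V s)ᴴ Λ^{T₁} (V s)`, while
`(V s)ᴴ (V s) = ‖b s‖² I` and `∑ s, ‖b s‖² = Tr ρ = 1`. The bound follows from the triangle
inequality, submultiplicativity of the operator norm and the C⋆-identity.
-/

open Matrix
open scoped Kronecker ComplexOrder

/-- Partial transposition on the first tensor factor. -/
def ptranspose1 {m n : Type*} (X : Matrix (m × n) (m × n) ℂ) : Matrix (m × n) (m × n) ℂ :=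
  Matrix.of fun p q => X (q.1, p.2) (p.1, q.2)

/-- The ℓ²→ℓ² operator norm (largest singular value) of a matrix. -/
noncomputable def opNorm {d : Type*} [Fintype d] [DecidableEq d] (X : Matrix d d ℂ) : ℝ :=
  ‖(Matrix.toEuclideanLin X).toContinuousLinearMap‖

open scoped Matrix.Norms.L2Operator in
theorem opNorm_eq_norm {d : Type*} [Fintype d] [DecidableEq d] (X : Matrix d d ℂ) :
    opNorm X = ‖X‖ := rfl

/-- The matrix of `y ↦ conj b ⊗ y`, mapping the second factor into the bipartite space. -/
noncomputable def tensorEmbed {m : Type*} (n : Type*) [DecidableEq n] (b : m → ℂ) :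
    Matrix (m × n) n ℂ :=
  Matrix.of fun p l => if p.2 = l then star (b p.1) else 0

theorem tensorEmbed_conjTranspose_mul_self {m n : Type*} [Fintype m] [Fintype n] [DecidableEq n]
    (b : m → ℂ) :
    (tensorEmbed n b)ᴴ * tensorEmbed n b =
      ((∑ i, ‖b i‖ ^ 2 : ℝ) : ℂ) • (1 : Matrix n n ℂ) := by
  ext j l
  simp only [tensorEmbed, Matrix.mul_apply, Matrix.conjTranspose_apply, Matrix.of_apply,
    Fintype.sum_prod_type, Matrix.smul_apply, Matrix.one_apply, smul_eq_mul]
  by_cases h : j = l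
  · subst h
    simp [apply_ite, ite_mul, Complex.mul_conj, Complex.normSq_eq_norm_sq]
  · simp [apply_ite, ite_mul, h, Ne.symm h]

open scoped Matrix.Norms.L2Operator in
theorem norm_compression_le {m n : Type*} [Fintype m] [Fintype n] [DecidableEq m] [DecidableEq n]
    (M : Matrix (m × n) (m × n) ℂ) (b : m → ℂ) :
    ‖(tensorEmbed n b)ᴴ * M * tensorEmbed n b‖ ≤ (∑ i, ‖b i‖ ^ 2) * ‖M‖ := by
  have h0 : (0 : ℝ) ≤ ∑ i, ‖b i‖ ^ 2 := by positivity
  -- Only `≤` holds: when `n` is empty, the identity matrix has norm `0`.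
  have h1 : ‖(1 : Matrix n n ℂ)‖ ≤ 1 := by
    rw [← Matrix.diagonal_one, Matrix.l2_opNorm_diagonal]
    exact (pi_norm_le_iff_of_nonneg zero_le_one).2 fun _ => by simp
  have hV : ‖tensorEmbed n b‖ * ‖tensorEmbed n b‖ ≤ ∑ i, ‖b i‖ ^ 2 := by
    rw [← Matrix.l2_opNorm_conjTranspose_mul_self, tensorEmbed_conjTranspose_mul_self, norm_smul,
      Complex.norm_real, Real.norm_of_nonneg h0]
    exact mul_le_of_le_one_right h0 h1
  calc ‖(tensorEmbed n b)ᴴ * M * tensorEmbed n b‖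
      ≤ ‖(tensorEmbed n b)ᴴ‖ * ‖M‖ * ‖tensorEmbed n b‖ :=
        (Matrix.l2_opNorm_mul _ _).trans <| by
          gcongr
          exact Matrix.l2_opNorm_mul _ _
    _ = (‖tensorEmbed n b‖ * ‖tensorEmbed n b‖) * ‖M‖ := by
        rw [Matrix.l2_opNorm_conjTranspose]; ring
    _ ≤ _ := by gcongr

/-- A factorization of `ρ` turns the output of the map with Choi matrix `Λ` into a sum of
compressions of the partial transpose of `Λ`. -/
theorem ptrace1_eq_sum_compression {m n : Type*} [Fintype m] [Fintype n] [DecidableEq n]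
    (Λ : Matrix (m × n) (m × n) ℂ) (B : Matrix m m ℂ) :
    ptrace1 (Λ * ((Bᴴ * B)ᵀ ⊗ₖ (1 : Matrix n n ℂ))) =
      ∑ s, (tensorEmbed n (B s))ᴴ * ptranspose1 Λ * tensorEmbed n (B s) := by
  ext j l
  have hR : ∀ s, ((tensorEmbed n (B s))ᴴ * ptranspose1 Λ * tensorEmbed n (B s)) j l =
      ∑ i, ∑ k, Λ (i, j) (k, l) * (star (B s i) * B s k) := by
    intro s
    simp only [tensorEmbed, ptranspose1, Matrix.mul_apply, Matrix.conjTranspose_apply,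
      Matrix.of_apply, Fintype.sum_prod_type]
    simp only [apply_ite star, star_zero, star_star, ite_mul, mul_ite, zero_mul, mul_zero,
      Finset.sum_ite_eq', Finset.mem_univ, if_true, Finset.sum_mul]
    refine Finset.sum_congr rfl fun i _ => Finset.sum_congr rfl fun k _ => ?_
    ring
  rw [Matrix.sum_apply, Finset.sum_congr rfl fun s _ => hR s, Finset.sum_comm]
  simp only [ptrace1, Matrix.of_apply, Matrix.mul_apply, Fintype.sum_prod_type,
    Matrix.kroneckerMap_apply, Matrix.transpose_apply, Matrix.conjTranspose_apply,
    Matrix.one_apply, mul_ite, mul_one, mul_zero, Finset.sum_ite_eq', Finset.mem_univ, if_true]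
  refine Finset.sum_congr rfl fun i _ => ?_
  rw [Finset.sum_comm]
  refine Finset.sum_congr rfl fun k _ => ?_
  rw [Finset.mul_sum]

open scoped Matrix.Norms.L2Operator MatrixOrder in
theorem exists_eq_conjTranspose_mul_self {m : Type*} [Fintype m] [DecidableEq m]
    {ρ : Matrix m m ℂ} (hρ : ρ.PosSemidef) : ∃ B : Matrix m m ℂ, ρ = Bᴴ * B :=
  CStarAlgebra.nonneg_iff_eq_star_mul_self.1 (Matrix.nonneg_iff_posSemidef.2 hρ)

/-- For a Hermitian `Λ` on the bipartite space and a density matrix `ρ`,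
`‖Tr₁(Λ (ρᵀ ⊗ I))‖_∞ ≤ ‖Λ^{T₁}‖_∞`. -/
theorem opNorm_output_le_opNorm_ptranspose_choi
    {m n : Type*} [Fintype m] [Fintype n] [DecidableEq m] [DecidableEq n]
    (Λ : Matrix (m × n) (m × n) ℂ) (hΛ : Λ.IsHermitian)
    (ρ : Matrix m m ℂ) (hρ : ρ.PosSemidef) (hρt : ρ.trace = 1) :
    opNorm (ptrace1 (Λ * (ρᵀ ⊗ₖ (1 : Matrix n n ℂ)))) ≤ opNorm (ptranspose1 Λ) := by
  obtain ⟨B, rfl⟩ := exists_eq_conjTranspose_mul_self hρ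
  have hB : ∑ s, ∑ i, ‖B s i‖ ^ 2 = 1 := by
    rw [Finset.sum_comm]
    have h : ((∑ i, ∑ s, ‖B s i‖ ^ 2 : ℝ) : ℂ) = 1 := by
      rw [← hρt]
      simp [Matrix.trace, Matrix.mul_apply, Complex.conj_mul']
    exact_mod_cast h
  rw [ptrace1_eq_sum_compression, opNorm_eq_norm, opNorm_eq_norm]
  open scoped Matrix.Norms.L2Operator in refine (norm_sum_le _ _).trans ?_
  refine (Finset.sum_le_sum fun s _ => norm_compression_le (ptranspose1 Λ) (B s)).trans ?_
  rw [← Finset.sum_mul, hB, one_mul]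
end
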